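/- Let n = dim_F(U) and let {f̂_0, f̂_1, …, f̂_{n−1}} ⊆ S[U]^G be a homogeneous system of parameters of S[U]^G with f̂_0 = f̂. Then the images {β(f̂_1), …, β(f̂_{n−1})} ⊆ S[V]^G form a homogeneous system of parameters of S[V]^G. -/

import Mathlib

set_option synthInstance.maxHeartbeats 1000000
set_option maxHeartbeats 1000000

open MvPolynomial

/-- The algebra endomorphism of the polynomial ring induced by a matrix acting (on the
right) on the coefficient row vectors of linear forms. -/
noncomputable def matSub {F : Type*} [CommRing F] {n : ℕ} (M : Matrix (Fin n) (Fin n) F) :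
    MvPolynomial (Fin n) F →ₐ[F] MvPolynomial (Fin n) F :=
  aeval (fun i => ∑ j, M i j • X j)

/-- The invariant ring of a matrix representation. -/
noncomputable def invariants {F : Type*} [CommRing F] {n : ℕ} {G : Type*} [Group G]
    (ρ : G →* GL (Fin n) F) : Subalgebra F (MvPolynomial (Fin n) F) where
  carrier := {p | ∀ σ : G, matSub ((ρ σ : Matrix (Fin n) (Fin n) F)) p = p}
  mul_mem' := fun ha hb σ => by rw [map_mul, ha σ, hb σ]
  add_mem' := fun ha hb σ => by rw [map_add, ha σ, hb σ]
  one_mem' := fun σ => map_one _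
  zero_mem' := fun σ => map_zero _
  algebraMap_mem' := fun r σ => AlgHom.commutes _ r

/-- The algebra homomorphism `S[U] → S[V]` induced by a linear map `U → V` given by a
(rectangular) matrix acting on the right on row vectors. -/
noncomputable def betaAlg {F : Type*} [CommRing F] {m : ℕ}
    (B : Matrix (Fin (m + 1)) (Fin m) F) :
    MvPolynomial (Fin (m + 1)) F →ₐ[F] MvPolynomial (Fin m) F :=
  aeval (fun i => ∑ j, B i j • X j)

/-- The linear form in `S[U]₁` corresponding to a vector of `U`. -/
noncomputable def linForm {F : Type*} [CommRing F] {n : ℕ} (v : Fin n → F) :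
    MvPolynomial (Fin n) F :=
  ∑ i, v i • X i

/-- A homogeneous system of parameters of an invariant ring `R ⊆ F[X₁,…,Xₙ]`: a family of
`n` algebraically independent homogeneous elements of positive degree over whose generated
polynomial subalgebra `R` is a finitely generated module. -/
def IsHSOP {F : Type*} [Field F] {n k : ℕ} (R : Subalgebra F (MvPolynomial (Fin n) F))
    (f : Fin k → R) : Prop :=
  AlgebraicIndependent F f ∧
  (∀ i, ∃ d : ℕ, 0 < d ∧ (f i : MvPolynomial (Fin n) F).IsHomogeneous d) ∧
  Module.Finite (Algebra.adjoin F (Set.range f)) R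

open MvPolynomial

lemma aux_finite {F R R' : Type*} [Field F] [CommRing R] [CommRing R'] [Algebra F R] [Algebra F R']
    (φ : R →ₐ[F] R') (hφ : Function.Surjective φ) (s : Set R) (s' : Set R')
    (hs : ∀ x ∈ s, φ x ∈ Algebra.adjoin F s')
    (h : Module.Finite (Algebra.adjoin F s) R) : Module.Finite (Algebra.adjoin F s') R' := by
  classical
  have hmem : ∀ a ∈ Algebra.adjoin F s, φ a ∈ Algebra.adjoin F s' := by
    have : Algebra.adjoin F s ≤ (Algebra.adjoin F s').comap φ := Algebra.adjoin_le hs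
    exact fun a ha => this ha
  obtain ⟨T, hT⟩ := h.fg_top
  refine ⟨⟨T.image φ, ?_⟩⟩
  rw [eq_top_iff]
  rintro y -
  obtain ⟨x, rfl⟩ := hφ y
  have hx : x ∈ Submodule.span (Algebra.adjoin F s) (T : Set R) := hT ▸ Submodule.mem_top
  induction hx using Submodule.span_induction with
  | mem x hx => exact Submodule.subset_span (by simpa using ⟨x, hx, rfl⟩)
  | zero => rw [map_zero]; exact Submodule.zero_mem _
  | add x y _ _ hx hy => rw [map_add]; exact Submodule.add_mem _ hx hy
  | smul a x _ hx =>
    have : φ (a • x) = (⟨φ a, hmem a a.2⟩ : Algebra.adjoin F s') • φ x := by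
      rw [Subalgebra.smul_def, Subalgebra.smul_def, smul_eq_mul, smul_eq_mul, map_mul]
    rw [this]
    exact Submodule.smul_mem _ _ hx

/-- generic substitution -/
noncomputable def gsub {F : Type*} [CommRing F] {n k : ℕ} (M : Matrix (Fin n) (Fin k) F) :
    MvPolynomial (Fin n) F →ₐ[F] MvPolynomial (Fin k) F :=
  aeval (fun i => ∑ j, M i j • X j)

lemma gsub_gsub {F : Type*} [CommRing F] {n k l : ℕ} (M : Matrix (Fin n) (Fin k) F)
    (N : Matrix (Fin k) (Fin l) F) (p : MvPolynomial (Fin n) F) :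
    gsub N (gsub M p) = gsub (M * N) p := by
  rw [← AlgHom.comp_apply]
  congr 1
  ext1 i
  simp only [gsub, AlgHom.comp_apply, aeval_X, map_sum, map_smul, Matrix.mul_apply,
    Finset.sum_smul, Finset.smul_sum, mul_smul]
  rw [Finset.sum_comm]

lemma gsub_one {F : Type*} [CommRing F] {n : ℕ} (p : MvPolynomial (Fin n) F) :
    gsub (1 : Matrix (Fin n) (Fin n) F) p = p := by
  have : gsub (1 : Matrix (Fin n) (Fin n) F) = AlgHom.id F _ := by
    ext1 i
    simp [gsub, Matrix.one_apply]
  rw [this]; rfl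

lemma matSub_eq {F : Type*} [CommRing F] {n : ℕ} (M : Matrix (Fin n) (Fin n) F) :
    matSub M = gsub M := rfl

lemma betaAlg_eq {F : Type*} [CommRing F] {m : ℕ} (M : Matrix (Fin (m+1)) (Fin m) F) :
    betaAlg M = gsub M := rfl

lemma gsub_linForm {F : Type*} [CommRing F] {n k : ℕ} (M : Matrix (Fin n) (Fin k) F)
    (v : Fin n → F) : gsub M (linForm v) = linForm (Matrix.vecMul v M) := by
  simp only [gsub, linForm, aeval_X, map_sum, map_smul, Matrix.vecMul, dotProduct,
    Finset.sum_smul, Finset.smul_sum, mul_smul]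
  rw [Finset.sum_comm]

lemma aux_integral {F : Type*} [Field F] {G : Type*} [Group G] [Finite G] {m : ℕ}
    (ρ : G →* GL (Fin m) F) :
    Algebra.IsIntegral (invariants ρ) (MvPolynomial (Fin m) F) := by
  letI : MulSemiringAction G (MvPolynomial (Fin m) F) :=
    { smul := fun σ p => gsub (ρ σ⁻¹ : Matrix (Fin m) (Fin m) F) p
      one_smul := fun p => by
        change gsub (ρ 1⁻¹ : Matrix (Fin m) (Fin m) F) p = p
        simp [gsub_one]
      mul_smul := fun σ τ p => by
        change gsub (ρ (σ * τ)⁻¹ : Matrix (Fin m) (Fin m) F) p =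
          gsub (ρ σ⁻¹ : Matrix (Fin m) (Fin m) F) (gsub (ρ τ⁻¹ : Matrix (Fin m) (Fin m) F) p)
        rw [gsub_gsub, mul_inv_rev, map_mul, Units.val_mul]
      smul_zero := fun σ => map_zero (gsub _)
      smul_add := fun σ => map_add (gsub _)
      smul_one := fun σ => map_one (gsub _)
      smul_mul := fun σ => map_mul (gsub _) }
  have : Algebra.IsInvariant (invariants ρ) (MvPolynomial (Fin m) F) G := by
    refine ⟨fun b hb => ⟨⟨b, fun σ => ?_⟩, rfl⟩⟩
    have : gsub (ρ σ⁻¹⁻¹ : Matrix (Fin m) (Fin m) F) b = b := hb σ⁻¹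
    rwa [inv_inv] at this
  exact Algebra.IsInvariant.isIntegral (invariants ρ) (MvPolynomial (Fin m) F) G

lemma aux_indep {F : Type*} [Field F] {G : Type*} [Group G] [Finite G] {m : ℕ}
    (ρ : G →* GL (Fin m) F) (g : Fin m → invariants ρ)
    (h : Module.Finite (Algebra.adjoin F (Set.range g)) (invariants ρ)) :
    AlgebraicIndependent F g := by
  have := aux_integral ρ
  have h1 := _root_.trdeg_add_eq F (invariants ρ) (A := MvPolynomial (Fin m) F)
  rw [_root_.trdeg_eq_zero (R := invariants ρ) (A := MvPolynomial (Fin m) F), add_zero, MvPolynomial.trdeg_of_isDomain] at h1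
  have : Algebra.IsAlgebraic (Algebra.adjoin F (Set.range g)) (invariants ρ) := inferInstance
  refine (Algebra.IsAlgebraic.isTranscendenceBasis_of_lift_le_trdeg_of_finite F g ?_).1
  rw [h1]; simp

/-- In the situation of a split short exact sequence
`0 → U' → U →(β) V → 0` of right `FG`-modules, with `U' ≅ F` the trivial module spanned by a
`G`-fixed element `f̂ ∈ U ⊆ S[U]₁`: if `{f̂₀, f̂₁, …, f̂ₙ₋₁} ⊆ S[U]^G` (with `n = dim_F U`)
is a homogeneous system of parameters of `S[U]^G` with `f̂₀ = f̂`, then the images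
`{β(f̂₁), …, β(f̂ₙ₋₁)} ⊆ S[V]^G` form a homogeneous system of parameters of `S[V]^G`. -/
theorem stmt4 {F : Type*} [Field F] {G : Type*} [Group G] [Finite G] {m : ℕ}
    (ρU : G →* GL (Fin (m + 1)) F) (ρV : G →* GL (Fin m) F)
    (B : Matrix (Fin (m + 1)) (Fin m) F) (fhat : Fin (m + 1) → F)
    (hsur : ∀ v : Fin m → F, ∃ u : Fin (m + 1) → F, Matrix.vecMul u B = v)
    (hker : ∀ u : Fin (m + 1) → F, Matrix.vecMul u B = 0 ↔ ∃ c : F, u = c • fhat)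
    (hne : fhat ≠ 0)
    (hequiv : ∀ σ : G, (ρU σ : Matrix (Fin (m + 1)) (Fin (m + 1)) F) * B
      = B * (ρV σ : Matrix (Fin m) (Fin m) F))
    (hfix : ∀ σ : G, Matrix.vecMul fhat (ρU σ : Matrix (Fin (m + 1)) (Fin (m + 1)) F) = fhat)
    (hsplit : ∃ γ : Matrix (Fin m) (Fin (m + 1)) F, γ * B = 1 ∧
      ∀ σ : G, (ρV σ : Matrix (Fin m) (Fin m) F) * γ
        = γ * (ρU σ : Matrix (Fin (m + 1)) (Fin (m + 1)) F))
    -- a homogeneous system of parameters `{f̂₀, …, f̂ₙ₋₁}` of `S[U]^G` with `f̂₀ = f̂`: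
    (fh : Fin (m + 1) → (invariants ρU))
    (hhsop : IsHSOP (invariants ρU) fh)
    (h0 : (fh 0 : MvPolynomial (Fin (m + 1)) F) = linForm fhat) :
    ∃ g : Fin m → (invariants ρV),
      (∀ i : Fin m, (g i : MvPolynomial (Fin m) F)
        = betaAlg B (fh i.succ : MvPolynomial (Fin (m + 1)) F)) ∧
      IsHSOP (invariants ρV) g := by
  obtain ⟨γ, hγB, hγ⟩ := hsplit
  have hβ : ∀ p ∈ invariants ρU, gsub B p ∈ invariants ρV := by
    intro p hp σ
    rw [matSub_eq, gsub_gsub, ← hequiv, ← gsub_gsub]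
    exact congrArg _ (hp σ)
  have hγm : ∀ p ∈ invariants ρV, gsub γ p ∈ invariants ρU := by
    intro p hp σ
    rw [matSub_eq, gsub_gsub, ← hγ, ← gsub_gsub]
    exact congrArg _ (hp σ)
  let φ : invariants ρU →ₐ[F] invariants ρV :=
    ((gsub B).comp (invariants ρU).val).codRestrict (invariants ρV) (fun p => hβ p p.2)
  have hφ : Function.Surjective φ := by
    intro q
    refine ⟨⟨gsub γ q, hγm q q.2⟩, Subtype.ext ?_⟩
    change gsub B (gsub γ q) = q
    rw [gsub_gsub, hγB, gsub_one]
  have hφ0 : φ (fh 0) = 0 := by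
    apply Subtype.ext
    change gsub B (fh 0) = 0
    rw [h0, gsub_linForm, (hker fhat).2 ⟨1, (one_smul _ _).symm⟩]
    simp [linForm]
  obtain ⟨-, hhom, hfin⟩ := hhsop
  have hfin' : Module.Finite (Algebra.adjoin F (Set.range fun i : Fin m => φ (fh i.succ)))
      (invariants ρV) := by
    refine aux_finite φ hφ _ _ ?_ hfin
    rintro _ ⟨i, rfl⟩
    refine Fin.cases ?_ (fun j => ?_) i
    · rw [hφ0]; exact Subalgebra.zero_mem _
    · exact Algebra.subset_adjoin ⟨j, rfl⟩
  refine ⟨fun i => φ (fh i.succ), fun i => rfl, aux_indep ρV _ hfin', fun i => ?_, hfin'⟩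
  obtain ⟨d, hd, hh⟩ := hhom i.succ
  refine ⟨d, hd, ?_⟩
  have := hh.aeval (S := F) (n := 1) (fun i => ∑ j, B i j • (X j : MvPolynomial (Fin m) F)) (fun i => by
    refine IsHomogeneous.sum _ _ _ fun j _ => ?_
    rw [smul_eq_C_mul]
    simpa using (isHomogeneous_C (Fin m) (B i j)).mul (isHomogeneous_X F j))
  rwa [one_mul] at this
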